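/- arXiv:2505.10608 — 9 statements merged into one kernel-verified Lean document; each statement's English description precedes it below -/
import Mathlib

section
/- Let G, P ∈ ℝ[x₁,…,x_N, t] and suppose the function F(x,t) = G(x,t)/t is non-constant on the open half-space H = ℝ^N × (0,∞). If there exists a function a, defined and continuous on the image F(H), such that P(x,t) = a(F(x,t)) for all (x,t) ∈ H, then P and G/t are algebraically dependent elements of the fraction field K. -/
open MvPolynomial in
lemma homog_aux (R : MvPolynomial (Fin 2) ℝ) : ∃ (n : ℕ) (Q : MvPolynomial (Fin 3) ℝ),
    ∀ (K : Type) [Field K] [Algebra ℝ K] (p g t : K), t ≠ 0 →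
      aeval ![p, g, t] Q = t ^ n * aeval ![p, g / t] R := by
  induction R using MvPolynomial.induction_on with
  | C c => exact ⟨0, C c, fun K _ _ p g t ht => by simp⟩
  | add R₁ R₂ h₁ h₂ =>
    obtain ⟨n₁, Q₁, h₁⟩ := h₁
    obtain ⟨n₂, Q₂, h₂⟩ := h₂
    refine ⟨n₁ + n₂, X 2 ^ n₂ * Q₁ + X 2 ^ n₁ * Q₂, fun K _ _ p g t ht => ?_⟩
    simp only [map_add, map_mul, map_pow, h₁ K p g t ht, h₂ K p g t ht, aeval_X]
    simp
    ring
  | mul_X R i h =>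
    obtain ⟨n, Q, h⟩ := h
    fin_cases i
    · refine ⟨n, Q * X 0, fun K _ _ p g t ht => ?_⟩
      simp only [map_mul, h K p g t ht, aeval_X]
      simp
      ring
    · refine ⟨n + 1, Q * X 1, fun K _ _ p g t ht => ?_⟩
      simp only [map_mul, h K p g t ht, aeval_X]
      simp
      field_simp
      ring

lemma dep_aux (x : Fin 2 → FractionRing (Polynomial ℝ)) :
    ∃ R : MvPolynomial (Fin 2) ℝ, R ≠ 0 ∧ MvPolynomial.aeval x R = 0 := by
  by_contra hcon
  push Not at hcon
  have hx : AlgebraicIndependent ℝ x := by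
    rw [algebraicIndependent_iff]
    intro p hp
    by_contra h0
    exact hcon p h0 hp
  have h1 := hx.cardinalMk_le_trdeg
  have h2 := trdeg_add_eq ℝ (Polynomial ℝ) (A := FractionRing (Polynomial ℝ))
  have : Algebra.IsAlgebraic (Polynomial ℝ) (FractionRing (Polynomial ℝ)) :=
    IsLocalization.isAlgebraic _ (nonZeroDivisors (Polynomial ℝ))
  rw [Polynomial.trdeg_of_isDomain, trdeg_eq_zero, add_zero] at h2
  rw [← h2] at h1
  simp at h1

open MvPolynomial in
lemma core_aux {σ : Type} [Finite σ] (P G : MvPolynomial σ ℝ) (j : σ) (a : ℝ → ℝ)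
    (u v : σ → ℝ) (hu : 0 < u j) (hv : 0 < v j)
    (huv : eval u G / u j ≠ eval v G / v j)
    (hP : ∀ w : σ → ℝ, 0 < w j → eval w P = a (eval w G / w j)) :
    ∃ R : MvPolynomial (Fin 2) ℝ, R ≠ 0 ∧
      aeval ![algebraMap (MvPolynomial σ ℝ) (FractionRing (MvPolynomial σ ℝ)) P,
        algebraMap (MvPolynomial σ ℝ) (FractionRing (MvPolynomial σ ℝ)) G /
          algebraMap (MvPolynomial σ ℝ) (FractionRing (MvPolynomial σ ℝ)) (X j)] R = 0 := by
  have := Fintype.ofFinite σ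
  -- the line
  let L : σ → Polynomial ℝ := fun i => Polynomial.C (u i) + Polynomial.X * Polynomial.C (v i - u i)
  let γ : ℝ → σ → ℝ := fun s i => u i + s * (v i - u i)
  have hL : ∀ (s : ℝ) (p : MvPolynomial σ ℝ), (aeval L p).eval s = eval (γ s) p := by
    intro s p
    rw [← Polynomial.coe_aeval_eq_eval, ← AlgHom.comp_apply, ← MvPolynomial.coe_aeval_eq_eval]
    change _ = aeval (γ s) p
    congr 1
    ext i
    simp [L, γ]
  have hγ0 : γ 0 = u := by ext i; simp [γ]
  have hγ1 : γ 1 = v := by ext i; simp [γ]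
  have hγpos : ∀ s ∈ Set.Icc (0 : ℝ) 1, 0 < γ s j := by
    intro s hs
    have : γ s j = (1 - s) * u j + s * v j := by simp only [γ]; ring
    rw [this]
    rcases hs.1.eq_or_lt with h | h
    · subst h; simpa
    · have := mul_pos h hv
      have := mul_nonneg (sub_nonneg.2 hs.2) hu.le
      linarith
  have hLj : L j ≠ 0 := by
    intro h
    have h1 := hL 0 (X j)
    rw [aeval_X, h, hγ0] at h1
    simp at h1
    exact hu.ne h1
  let ι := algebraMap (Polynomial ℝ) (FractionRing (Polynomial ℝ))
  obtain ⟨R, hR0, hR⟩ := dep_aux ![ι (aeval L P), ι (aeval L G) / ι (L j)]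
  obtain ⟨n, Q, hQ⟩ := homog_aux R
  have hιj : ι (L j) ≠ 0 := by
    intro h
    exact hLj ((IsFractionRing.injective (Polynomial ℝ) (FractionRing (Polynomial ℝ)))
      (by rw [map_zero]; exact h))
  have hvec : ∀ {A B : Type} [CommRing A] [CommRing B] [Algebra ℝ A] [Algebra ℝ B] (f : A →ₐ[ℝ] B)
      (x y z : A), f (aeval ![x, y, z] Q) = aeval ![f x, f y, f z] Q := by
    intro A B _ _ _ _ f x y z
    rw [← AlgHom.comp_apply]
    congr 1
    ext i
    fin_cases i <;> simp
  have hQL : aeval ![aeval L P, aeval L G, L j] Q = 0 := by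
    apply IsFractionRing.injective (Polynomial ℝ) (FractionRing (Polynomial ℝ))
    rw [map_zero]
    have := hvec (IsScalarTower.toAlgHom ℝ (Polynomial ℝ) (FractionRing (Polynomial ℝ)))
      (aeval L P) (aeval L G) (L j)
    refine this.trans ?_
    refine (hQ _ _ _ _ hιj).trans ?_
    exact mul_eq_zero_of_right _ hR
  have hseg : ∀ s ∈ Set.Icc (0 : ℝ) 1,
      aeval ![a (eval (γ s) G / γ s j), eval (γ s) G / γ s j] R = 0 := by
    intro s hs
    have h1 := hvec (Polynomial.aeval s : Polynomial ℝ →ₐ[ℝ] ℝ) (aeval L P) (aeval L G) (L j)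
    have h2 : (L j).eval s = γ s j := by simp [L, γ]
    rw [hQL, map_zero] at h1
    simp only [Polynomial.coe_aeval_eq_eval, hL, h2] at h1
    rw [hQ ℝ _ _ _ (hγpos s hs).ne', hP _ (hγpos s hs)] at h1
    exact (mul_eq_zero.1 h1.symm).resolve_left (pow_ne_zero _ (hγpos s hs).ne')
  have hγc : Continuous γ := by fun_prop
  have hGc : Continuous fun w : σ → ℝ => eval w G := MvPolynomial.continuous_eval G
  let f : ℝ → ℝ := fun s => eval (γ s) G / γ s j
  have hfc : ContinuousOn f (Set.uIcc 0 1) := by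
    rw [Set.uIcc_of_le zero_le_one]
    refine ContinuousOn.div (hGc.comp hγc).continuousOn
      ((continuous_apply j).comp hγc).continuousOn fun s hs => (hγpos s hs).ne'
  have hivt := intermediate_value_uIcc hfc
  rw [Set.uIcc_of_le (zero_le_one (α := ℝ))] at hivt
  have hne : min (f 0) (f 1) < max (f 0) (f 1) := by
    apply min_lt_max.2
    simpa only [f, hγ0, hγ1] using huv
  obtain ⟨m, hm⟩ := exists_between hne
  obtain ⟨s₀, hs₀, hfs₀⟩ := hivt (show m ∈ Set.uIcc (f 0) (f 1) from ⟨hm.1.le, hm.2.le⟩)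
  let U : Set (σ → ℝ) := {w | 0 < w j} ∩ (fun w => eval w G / w j) ⁻¹'
    Set.Ioo (min (f 0) (f 1)) (max (f 0) (f 1))
  have hUo : IsOpen U := by
    apply ContinuousOn.isOpen_inter_preimage _ _ isOpen_Ioo
    · exact hGc.continuousOn.div (continuous_apply j).continuousOn fun w hw => ne_of_gt hw
    · exact isOpen_lt continuous_const (continuous_apply j)
  have hUm : γ s₀ ∈ U := by
    refine ⟨hγpos s₀ hs₀, ?_⟩
    change f s₀ ∈ Set.Ioo _ _
    rw [hfs₀]
    exact hm
  have hUQ : ∀ w ∈ U, eval w (aeval ![P, G, X j] Q) = 0 := by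
    intro w hw
    obtain ⟨hw1, hw2⟩ := hw
    obtain ⟨s, hs, hfs⟩ := hivt (show eval w G / w j ∈ Set.uIcc (f 0) (f 1) from
      ⟨hw2.1.le, hw2.2.le⟩)
    have h1 := hvec (aeval w : MvPolynomial σ ℝ →ₐ[ℝ] ℝ) P G (X j)
    have e : ∀ p : MvPolynomial σ ℝ, aeval w p = eval w p := fun p => rfl
    simp only [e, eval_X] at h1
    rw [h1, hQ ℝ _ _ _ (ne_of_gt hw1), hP w hw1, ← hfs]
    have := hseg s hs
    change _ * aeval ![a (f s), f s] R = 0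
    rw [show aeval ![a (f s), f s] R = 0 from this, mul_zero]
  have hQ0 : aeval ![P, G, X j] Q = 0 := by
    obtain ⟨ε, hε, hb⟩ := Metric.isOpen_iff.1 hUo _ hUm
    refine MvPolynomial.funext_set (fun i => Metric.ball (γ s₀ i) ε) ?_ ?_
    · intro i
      rw [Real.ball_eq_Ioo]
      exact Set.Ioo_infinite (by linarith)
    · intro w hw
      rw [map_zero]
      apply hUQ w (hb _)
      rw [ball_pi _ hε]
      exact hw
  refine ⟨R, hR0, ?_⟩
  have hj : algebraMap (MvPolynomial σ ℝ) (FractionRing (MvPolynomial σ ℝ)) (X j) ≠ 0 := by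
    intro h
    exact X_ne_zero (R := ℝ) j
      ((IsFractionRing.injective (MvPolynomial σ ℝ) (FractionRing (MvPolynomial σ ℝ)))
        (by rw [map_zero]; exact h))
  have h1 := hvec (IsScalarTower.toAlgHom ℝ (MvPolynomial σ ℝ) (FractionRing (MvPolynomial σ ℝ)))
    P G (X j)
  rw [hQ0, map_zero] at h1
  have h2 := h1.trans (hQ _ _ _ _ hj)
  exact (mul_eq_zero.1 h2.symm).resolve_left (pow_ne_zero _ hj)



/-- Polynomials `G, P ∈ ℝ[x₁,…,x_N, t]` (modelled as
`MvPolynomial (Fin N ⊕ Unit) ℝ`, `t = X (Sum.inr ())`) are identified with the functions they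
define on `ℝ^N × ℝ`.  Suppose `F(x,t) = G(x,t)/t` is non-constant on the open half-space
`H = ℝ^N × (0,∞)` and there is a function `a` continuous on `F(H)` with `P = a ∘ F` on `H`.
Then `P` and `G/t` are algebraically dependent elements of the fraction field. -/
theorem stmt_2 (N : ℕ) (P G : MvPolynomial (Fin N ⊕ Unit) ℝ)
    (F : (Fin N → ℝ) × ℝ → ℝ)
    (hF : ∀ p : (Fin N → ℝ) × ℝ,
      F p = MvPolynomial.eval (Sum.elim p.1 fun _ => p.2) G / p.2)
    (hnc : ∃ p ∈ {q : (Fin N → ℝ) × ℝ | 0 < q.2}, ∃ p' ∈ {q : (Fin N → ℝ) × ℝ | 0 < q.2},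
      F p ≠ F p')
    (a : ℝ → ℝ)
    (ha : ContinuousOn a (F '' {q : (Fin N → ℝ) × ℝ | 0 < q.2}))
    (hP : ∀ p ∈ {q : (Fin N → ℝ) × ℝ | 0 < q.2},
      MvPolynomial.eval (Sum.elim p.1 fun _ => p.2) P = a (F p)) :
    ∃ R : MvPolynomial (Fin 2) ℝ, R ≠ 0 ∧
      MvPolynomial.eval₂
        ((algebraMap (MvPolynomial (Fin N ⊕ Unit) ℝ)
            (FractionRing (MvPolynomial (Fin N ⊕ Unit) ℝ))).comp MvPolynomial.C)
        ![algebraMap (MvPolynomial (Fin N ⊕ Unit) ℝ)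
            (FractionRing (MvPolynomial (Fin N ⊕ Unit) ℝ)) P,
          algebraMap (MvPolynomial (Fin N ⊕ Unit) ℝ)
            (FractionRing (MvPolynomial (Fin N ⊕ Unit) ℝ)) G /
          algebraMap (MvPolynomial (Fin N ⊕ Unit) ℝ)
            (FractionRing (MvPolynomial (Fin N ⊕ Unit) ℝ))
            (MvPolynomial.X (Sum.inr ()))] R = 0 := by
  obtain ⟨p, hp, q, hq, hpq⟩ := hnc
  rw [hF, hF] at hpq
  obtain ⟨R, hR0, hR⟩ := core_aux P G (Sum.inr ()) a (Sum.elim p.1 fun _ => p.2)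
    (Sum.elim q.1 fun _ => q.2) hp hq hpq (by
      intro w hw
      have h := hP (fun i => w (Sum.inl i), w (Sum.inr ())) hw
      have hw' : (Sum.elim (fun i => w (Sum.inl i)) fun _ => w (Sum.inr ())) = w := by
        ext i
        rcases i with i | i <;> rfl
      rw [hF] at h
      simpa only [hw'] using h)
  refine ⟨R, hR0, ?_⟩
  rw [MvPolynomial.aeval_def] at hR
  exact hR
end

section
/- Let G be a polynomial function on V × Z × ℝ not divisible by t, set F = G/t, and suppose there exist b₁, b₀ ∈ ℝ such that F satisfies the transnormality condition. Write G(v,z,t) = Σ_{k=0}^r G_k(v,z)·t^k with G_r ≠ 0, so r is the degree of G in the variable t. Then r ≤ 2, and if r ≥ 1 then G_r is a constant polynomial. -/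
noncomputable section

open MvPolynomial

/-- The standard inner product on `ℝᵏ`. -/
def dotR {k : ℕ} (a b : Fin k → ℝ) : ℝ := ∑ i, a i * b i

/-- Evaluation of a polynomial on `V × Z × ℝ` (`V = ℝⁿ`, `Z = ℝᵐ`) at the point `(v, z, t)`. -/
def evp {n m : ℕ} (q : MvPolynomial (Fin n ⊕ Fin m ⊕ Unit) ℝ)
    (v : Fin n → ℝ) (z : Fin m → ℝ) (t : ℝ) : ℝ :=
  MvPolynomial.eval (Sum.elim v (Sum.elim z fun _ => t)) q

/-- The transnormality condition for `F = G/t` with constants `b₁, b₀`: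
`(1/t)(−2G·∂_tG + Σᵢ (∂_{eᵢ}G − ½∂_{[eᵢ,v]}G)²) + Σ_α (∂_{f_α}G)² + (∂_tG)² = b₁·(G/t) + b₀`
at every point of the half-space `S = {t > 0}`, where the partial derivatives of the polynomial
`G` are the polynomial partial derivatives, and `∂_{[eᵢ,v]}G = Σ_α [eᵢ,v]_α · ∂_{f_α}G` with
`[·,·] = br` the Lie bracket `V × V → Z`. -/
def Transnormal (n m : ℕ) (br : (Fin n → ℝ) →ₗ[ℝ] (Fin n → ℝ) →ₗ[ℝ] (Fin m → ℝ))
    (G : MvPolynomial (Fin n ⊕ Fin m ⊕ Unit) ℝ) (b₁ b₀ : ℝ) : Prop :=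
  ∀ (v : Fin n → ℝ) (z : Fin m → ℝ) (t : ℝ), 0 < t →
    (1 / t) * (-2 * evp G v z t * evp (pderiv (Sum.inr (Sum.inr ())) G) v z t
        + ∑ i : Fin n,
            (evp (pderiv (Sum.inl i) G) v z t
              - (1 / 2) * ∑ α : Fin m,
                  (br (Pi.single i 1) v) α * evp (pderiv (Sum.inr (Sum.inl α)) G) v z t) ^ 2)
      + (∑ α : Fin m, (evp (pderiv (Sum.inr (Sum.inl α)) G) v z t) ^ 2)
      + (evp (pderiv (Sum.inr (Sum.inr ())) G) v z t) ^ 2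
    = b₁ * (evp G v z t / t) + b₀


/-- A real univariate polynomial given by its coefficients up to degree `r`. -/
def polR (r : ℕ) (c : ℕ → ℝ) : Polynomial ℝ :=
  ∑ k ∈ Finset.range (r + 1), Polynomial.C (c k) * Polynomial.X ^ k

theorem polR_coeff (r : ℕ) (c : ℕ → ℝ) : (polR r c).coeff r = c r := by
  simp [polR, Polynomial.finsetSum_coeff, Polynomial.coeff_X_pow]

theorem polR_natDegree (r : ℕ) (c : ℕ → ℝ) : (polR r c).natDegree ≤ r := by
  refine Polynomial.natDegree_sum_le_of_forall_le _ _ fun k hk => ?_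
  have := Polynomial.natDegree_C_mul_X_pow_le (c k) k
  have := Finset.mem_range.1 hk
  omega

theorem polR_eval (r : ℕ) (c : ℕ → ℝ) (t : ℝ) :
    (polR r c).eval t = ∑ k ∈ Finset.range (r + 1), c k * t ^ k := by
  simp [polR, Polynomial.eval_finsetSum]

theorem natDegree_le_pred {p : Polynomial ℝ} {s : ℕ} (h : p.natDegree ≤ s + 1)
    (h0 : p.coeff (s + 1) = 0) : p.natDegree ≤ s := by
  rw [Polynomial.natDegree_le_iff_coeff_eq_zero]
  intro N hN
  rcases Nat.lt_or_ge (s + 1) N with h1 | h1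
  · exact Polynomial.coeff_eq_zero_of_natDegree_lt (by omega)
  · have : N = s + 1 := by omega
    rw [this, h0]

theorem coeff_sq_top {p : Polynomial ℝ} {s : ℕ} (h : p.natDegree ≤ s) :
    (p ^ 2).coeff (2 * s) = p.coeff s ^ 2 := Polynomial.coeff_pow_of_natDegree_le h

theorem coeff_sq_zero {p : Polynomial ℝ} {s N : ℕ} (h : p.natDegree ≤ s) (hN : 2 * s < N) :
    (p ^ 2).coeff N = 0 := by
  refine Polynomial.coeff_eq_zero_of_natDegree_lt ?_
  have := Polynomial.natDegree_pow_le (p := p) (n := 2)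
  omega

/-- The univariate core: comparison of the top coefficients in `t`. -/
theorem core {n m s : ℕ} (g : Polynomial ℝ) (x : Fin n → Polynomial ℝ)
    (a : Fin m → Polynomial ℝ) (b₁ b₀ : ℝ)
    (hg : g.natDegree ≤ s + 1) (hx : ∀ i, (x i).natDegree ≤ s + 1)
    (ha : ∀ α, (a α).natDegree ≤ s + 1)
    (h : Polynomial.C (-2) * (g * Polynomial.derivative g) + ∑ i, x i ^ 2
        + Polynomial.X * (∑ α, a α ^ 2) + Polynomial.X * (Polynomial.derivative g) ^ 2
        = Polynomial.C b₁ * g + Polynomial.C b₀ * Polynomial.X) :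
    (∀ α, (a α).coeff (s + 1) = 0) ∧ (∀ i, (x i).coeff (s + 1) = 0) ∧
      (g.coeff (s + 1) ≠ 0 → s + 1 ≤ 2) := by
  have hd : (Polynomial.derivative g).natDegree ≤ s := by
    have := Polynomial.natDegree_derivative_le g
    omega
  have hgd : (g * Polynomial.derivative g).natDegree ≤ s + 1 + s :=
    Polynomial.natDegree_mul_le_of_le hg hd
  have hA : ∀ α, (a α).coeff (s + 1) = 0 := by
    have e := congrArg (fun p => Polynomial.coeff p (2 * (s + 1) + 1)) h
    simp only [Polynomial.coeff_add, Polynomial.coeff_C_mul, Polynomial.coeff_X_mul,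
      Polynomial.finsetSum_coeff] at e
    rw [Polynomial.coeff_eq_zero_of_natDegree_lt (p := g * _) (by omega),
      Finset.sum_eq_zero (fun i _ => coeff_sq_zero (hx i) (by omega)),
      Finset.sum_congr rfl (fun α _ => coeff_sq_top (ha α)), coeff_sq_zero hd (by omega),
      Polynomial.coeff_eq_zero_of_natDegree_lt (p := g) (by omega),
      Polynomial.coeff_X_of_ne_one (by omega)] at e
    have e' : ∑ α, (a α).coeff (s + 1) ^ 2 = 0 := by linarith
    rw [Finset.sum_eq_zero_iff_of_nonneg (fun _ _ => sq_nonneg _)] at e'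
    exact fun α => pow_eq_zero_iff (two_ne_zero) |>.1 (e' α (Finset.mem_univ _))
  have ha' : ∀ α, (a α).natDegree ≤ s := fun α => natDegree_le_pred (ha α) (hA α)
  have hX : ∀ i, (x i).coeff (s + 1) = 0 := by
    have e := congrArg (fun p => Polynomial.coeff p (2 * (s + 1))) h
    have e2 : 2 * (s + 1) = (2 * s + 1) + 1 := by ring
    simp only [Polynomial.coeff_add, Polynomial.coeff_C_mul, Polynomial.finsetSum_coeff] at e
    rw [Polynomial.coeff_eq_zero_of_natDegree_lt (p := g * _) (by omega),
      Finset.sum_congr rfl (fun i _ => coeff_sq_top (hx i)),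
      Polynomial.coeff_eq_zero_of_natDegree_lt (p := g) (by omega),
      Polynomial.coeff_X_of_ne_one (by omega), e2, Polynomial.coeff_X_mul, Polynomial.coeff_X_mul,
      coeff_sq_zero hd (by omega), Polynomial.finsetSum_coeff,
      Finset.sum_eq_zero (fun α _ => coeff_sq_zero (ha' α) (by omega))] at e
    have e' : ∑ i, (x i).coeff (s + 1) ^ 2 = 0 := by linarith
    rw [Finset.sum_eq_zero_iff_of_nonneg (fun _ _ => sq_nonneg _)] at e'
    exact fun α => pow_eq_zero_iff (two_ne_zero) |>.1 (e' α (Finset.mem_univ _))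
  have hx' : ∀ i, (x i).natDegree ≤ s := fun i => natDegree_le_pred (hx i) (hX i)
  refine ⟨hA, hX, fun hc => ?_⟩
  by_contra hs
  have e := congrArg (fun p => Polynomial.coeff p (2 * s + 1)) h
  simp only [Polynomial.coeff_add, Polynomial.coeff_C_mul, Polynomial.coeff_X_mul,
    Polynomial.finsetSum_coeff] at e
  have e1 : (g * Polynomial.derivative g).coeff (2 * s + 1)
      = g.coeff (s + 1) * (Polynomial.derivative g).coeff s := by
    rw [← Polynomial.coeff_mul_add_eq_of_natDegree_le hg hd]
    congr 1
    ring
  have hz : g.coeff (2 * s + 1) = 0 := Polynomial.coeff_eq_zero_of_natDegree_lt (by omega)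
  rw [e1, Finset.sum_eq_zero (fun i _ => coeff_sq_zero (hx' i) (by omega)),
    Finset.sum_congr rfl (fun α _ => coeff_sq_top (ha' α)), coeff_sq_top hd, hz,
    Polynomial.coeff_X_of_ne_one (by omega), Polynomial.coeff_derivative] at e
  have hp : 0 ≤ ∑ α, (a α).coeff s ^ 2 := Finset.sum_nonneg (fun _ _ => sq_nonneg _)
  have hs' : (2 : ℝ) ≤ s := by exact_mod_cast (by omega : 2 ≤ s)
  have hq : 0 < g.coeff (s + 1) ^ 2 := by positivity
  have hq2 : 0 < g.coeff (s + 1) ^ 2 * (((s : ℝ) + 1) * (s - 1)) := by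
    apply mul_pos hq
    apply mul_pos <;> linarith
  nlinarith

theorem eq_C_of_pderiv {σ : Type*} (p : MvPolynomial σ ℝ) (h : ∀ i, pderiv i p = 0) :
    ∃ c, p = C c := by
  classical
  refine ⟨p.coeff 0, ?_⟩
  ext d
  rw [coeff_C]
  split_ifs with hd
  · rw [← hd]
  · obtain ⟨i, hi⟩ : ∃ i, d i ≠ 0 := by
      by_contra! hne
      exact hd (Finsupp.ext (fun i => (hne i).symm))
    have h1 := coeff_pderiv (i := i) p (d - Finsupp.single i 1)
    have h2 : d - Finsupp.single i 1 + Finsupp.single i 1 = d := by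
      apply tsub_add_cancel_of_le
      simpa [Finsupp.single_le_iff] using Nat.one_le_iff_ne_zero.2 hi
    rw [h i, h2, coeff_zero] at h1
    have h3 : (((d - Finsupp.single i 1 : σ →₀ ℕ) i : ℕ) : ℝ) + 1 ≠ 0 := by positivity
    exact (mul_eq_zero.1 h1.symm).resolve_right h3

theorem evp_rename {n m : ℕ} (q : MvPolynomial (Fin n ⊕ Fin m) ℝ) (v : Fin n → ℝ)
    (z : Fin m → ℝ) (t : ℝ) :
    evp (rename (Sum.map id Sum.inl : Fin n ⊕ Fin m → Fin n ⊕ Fin m ⊕ Unit) q) v z t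
      = eval (Sum.elim v z) q := by
  rw [evp, eval_rename]
  congr 2
  ext (i | i) <;> rfl

theorem inj_map {n m : ℕ} :
    Function.Injective (Sum.map id Sum.inl : Fin n ⊕ Fin m → Fin n ⊕ Fin m ⊕ Unit) :=
  Function.Injective.sumMap Function.injective_id Sum.inl_injective

theorem evp_G {n m r : ℕ} (Gk : ℕ → MvPolynomial (Fin n ⊕ Fin m) ℝ) (v : Fin n → ℝ)
    (z : Fin m → ℝ) (t : ℝ) :
    evp (∑ k ∈ Finset.range (r + 1),
      rename (Sum.map id Sum.inl : Fin n ⊕ Fin m → Fin n ⊕ Fin m ⊕ Unit) (Gk k)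
        * X (Sum.inr (Sum.inr ())) ^ k) v z t
      = (polR r (fun k => eval (Sum.elim v z) (Gk k))).eval t := by
  rw [polR_eval, evp, map_sum]
  refine Finset.sum_congr rfl fun k _ => ?_
  rw [map_mul, ← evp_rename (Gk k) v z t, evp]
  simp

theorem pderiv_G {n m r : ℕ} (Gk : ℕ → MvPolynomial (Fin n ⊕ Fin m) ℝ) (j : Fin n ⊕ Fin m) :
    pderiv (Sum.map id Sum.inl j : Fin n ⊕ Fin m ⊕ Unit) (∑ k ∈ Finset.range (r + 1),
      rename (Sum.map id Sum.inl : Fin n ⊕ Fin m → Fin n ⊕ Fin m ⊕ Unit) (Gk k)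
        * X (Sum.inr (Sum.inr ())) ^ k)
      = ∑ k ∈ Finset.range (r + 1),
      rename (Sum.map id Sum.inl : Fin n ⊕ Fin m → Fin n ⊕ Fin m ⊕ Unit) (pderiv j (Gk k))
        * X (Sum.inr (Sum.inr ())) ^ k := by
  rw [map_sum]
  refine Finset.sum_congr rfl fun k _ => ?_
  have hne : (Sum.inr (Sum.inr ()) : Fin n ⊕ Fin m ⊕ Unit) ≠ Sum.map id Sum.inl j := by
    rcases j with j | j <;> simp
  rw [pderiv_mul, pderiv_rename inj_map, pderiv_pow, pderiv_X_of_ne hne]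
  simp

theorem evp_pderiv_t {n m r : ℕ} (Gk : ℕ → MvPolynomial (Fin n ⊕ Fin m) ℝ) (v : Fin n → ℝ)
    (z : Fin m → ℝ) (t : ℝ) :
    evp (pderiv (Sum.inr (Sum.inr ())) (∑ k ∈ Finset.range (r + 1),
      rename (Sum.map id Sum.inl : Fin n ⊕ Fin m → Fin n ⊕ Fin m ⊕ Unit) (Gk k)
        * X (Sum.inr (Sum.inr ())) ^ k)) v z t
      = (Polynomial.derivative (polR r (fun k => eval (Sum.elim v z) (Gk k)))).eval t := by
  rw [polR, map_sum, map_sum, Polynomial.eval_finsetSum, evp, map_sum]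
  refine Finset.sum_congr rfl fun k _ => ?_
  have h0 : pderiv (Sum.inr (Sum.inr ()))
      (rename (Sum.map id Sum.inl : Fin n ⊕ Fin m → Fin n ⊕ Fin m ⊕ Unit) (Gk k)) = 0 := by
    classical
    apply pderiv_eq_zero_of_notMem_vars
    intro hmem
    obtain ⟨j, -, hj⟩ := Finset.mem_image.1 (vars_rename _ _ hmem)
    rcases j with j | j <;> simp at hj
  rw [pderiv_mul, h0, pderiv_pow, pderiv_X_self, zero_mul, zero_add, map_mul,
    ← evp_rename (Gk k) v z t, evp]
  simp [Polynomial.derivative_X_pow]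

/-- Let `G = Σ_{k=0}^r G_k(v,z)·tᵏ` (with `G_r ≠ 0`, so `r` is the `t`-degree of
`G`) be a polynomial not divisible by `t` such that `F = G/t` satisfies the transnormality
condition for some constants `b₁, b₀`.  Then `r ≤ 2`, and if `r ≥ 1` then `G_r` is a constant
polynomial. -/
theorem stmt_4 (n m : ℕ)
    (J : (Fin m → ℝ) →ₗ[ℝ] (Fin n → ℝ) →ₗ[ℝ] (Fin n → ℝ))
    (hJ : ∀ (z : Fin m → ℝ) (v : Fin n → ℝ), dotR (J z v) (J z v) = dotR z z * dotR v v)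
    (br : (Fin n → ℝ) →ₗ[ℝ] (Fin n → ℝ) →ₗ[ℝ] (Fin m → ℝ))
    (hbr : ∀ (v₁ v₂ : Fin n → ℝ) (z : Fin m → ℝ), dotR (br v₁ v₂) z = dotR (J z v₁) v₂)
    (G : MvPolynomial (Fin n ⊕ Fin m ⊕ Unit) ℝ)
    (hGdiv : ¬ (MvPolynomial.X (Sum.inr (Sum.inr ())) ∣ G))
    (r : ℕ) (Gk : ℕ → MvPolynomial (Fin n ⊕ Fin m) ℝ)
    (hGr : Gk r ≠ 0)
    (hdecomp : G = ∑ k ∈ Finset.range (r + 1),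
      MvPolynomial.rename (Sum.map id Sum.inl : Fin n ⊕ Fin m → Fin n ⊕ Fin m ⊕ Unit) (Gk k)
        * MvPolynomial.X (Sum.inr (Sum.inr ())) ^ k)
    (b₁ b₀ : ℝ) (htrans : Transnormal n m br G b₁ b₀) :
    r ≤ 2 ∧ (1 ≤ r → ∃ c : ℝ, Gk r = MvPolynomial.C c) := by
  have key : ∀ s, r = s + 1 → ∀ v z,
      (∀ α, eval (Sum.elim v z) (pderiv (Sum.inr α) (Gk r)) = 0) ∧
      (∀ i, eval (Sum.elim v z) (pderiv (Sum.inl i) (Gk r)) = 0) ∧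
      (eval (Sum.elim v z) (Gk r) ≠ 0 → r ≤ 2) := by
    intro s hs v z
    set g := polR r (fun k => eval (Sum.elim v z) (Gk k)) with hgdef
    set a : Fin m → Polynomial ℝ := fun α =>
      polR r (fun k => eval (Sum.elim v z) (pderiv (Sum.inr α) (Gk k))) with hadef
    set y : Fin n → Polynomial ℝ := fun i =>
      polR r (fun k => eval (Sum.elim v z) (pderiv (Sum.inl i) (Gk k))) with hydef
    set x : Fin n → Polynomial ℝ := fun i => y i - Polynomial.C (1 / 2) *
      ∑ α, Polynomial.C ((br (Pi.single i 1) v) α) * a α with hxdef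
    have hg : ∀ t, evp G v z t = g.eval t := fun t => by rw [hdecomp, evp_G]
    have hgt : ∀ t, evp (pderiv (Sum.inr (Sum.inr ())) G) v z t
        = (Polynomial.derivative g).eval t := fun t => by rw [hdecomp, evp_pderiv_t]
    have hga : ∀ α t, evp (pderiv (Sum.inr (Sum.inl α)) G) v z t = (a α).eval t :=
      fun α t => by
        have := pderiv_G (r := r) Gk (Sum.inr α)
        rw [Sum.map_inr] at this
        rw [hdecomp, this, evp_G]
    have hgy : ∀ i t, evp (pderiv (Sum.inl i) G) v z t = (y i).eval t :=
      fun i t => by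
        have := pderiv_G (r := r) Gk (Sum.inl i)
        rw [Sum.map_inl, id] at this
        rw [hdecomp, this, evp_G]
    have hda : ∀ α, (a α).natDegree ≤ s + 1 := fun α => hs ▸ polR_natDegree _ _
    have hdx : ∀ i, (x i).natDegree ≤ s + 1 := fun i => by
      rw [← max_self (s + 1)]
      refine Polynomial.natDegree_sub_le_of_le ((polR_natDegree _ _).trans hs.le)
        ((Polynomial.natDegree_C_mul_le _ _).trans ?_)
      exact Polynomial.natDegree_sum_le_of_forall_le _ _ fun α _ =>
        (Polynomial.natDegree_C_mul_le _ _).trans (hda α)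
    have hid : Polynomial.C (-2) * (g * Polynomial.derivative g) + ∑ i, x i ^ 2
        + Polynomial.X * (∑ α, a α ^ 2) + Polynomial.X * (Polynomial.derivative g) ^ 2
        = Polynomial.C b₁ * g + Polynomial.C b₀ * Polynomial.X := by
      refine Polynomial.eq_of_infinite_eval_eq _ _ ((Set.Ioi_infinite (0 : ℝ)).mono ?_)
      intro t ht
      have ht0 : 0 < t := ht
      have h := htrans v z t ht0
      simp only [hg, hgt, hga, hgy] at h
      simp only [Set.mem_ofPred_eq, hxdef, Polynomial.eval_add, Polynomial.eval_mul,
        Polynomial.eval_C, Polynomial.eval_finsetSum, Polynomial.eval_pow, Polynomial.eval_X,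
        Polynomial.eval_sub]
      generalize (∑ i : Fin n, (Polynomial.eval t (y i) - 1 / 2 * ∑ α : Fin m,
        (br (Pi.single i 1) v) α * Polynomial.eval t (a α)) ^ 2) = S at h ⊢
      field_simp at h
      linear_combination h
    obtain ⟨h1, h2, h3⟩ := core g x a b₁ b₀ ((polR_natDegree _ _).trans hs.le) hdx hda hid
    have hca : ∀ α, (a α).coeff (s + 1) = eval (Sum.elim v z) (pderiv (Sum.inr α) (Gk r)) :=
      fun α => by rw [← hs]; exact polR_coeff _ _
    have hcy : ∀ i, (y i).coeff (s + 1) = eval (Sum.elim v z) (pderiv (Sum.inl i) (Gk r)) :=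
      fun α => by rw [← hs]; exact polR_coeff _ _
    have hcg : g.coeff (s + 1) = eval (Sum.elim v z) (Gk r) := by
      rw [← hs]; exact polR_coeff _ _
    refine ⟨fun α => by rw [← hca, h1], fun i => ?_, fun h => hs ▸ h3 (hcg ▸ h)⟩
    have := h2 i
    simp only [hxdef, Polynomial.coeff_sub, Polynomial.coeff_C_mul,
      Polynomial.finsetSum_coeff, h1, mul_zero, Finset.sum_const_zero, sub_zero] at this
    rw [← hcy, this]
  rcases r with _ | s
  · exact ⟨by omega, fun h => by omega⟩
  have key := key s rfl
  have elim_eq : ∀ w : Fin n ⊕ Fin m → ℝ, Sum.elim (w ∘ Sum.inl) (w ∘ Sum.inr) = w :=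
    fun w => Sum.elim_comp_inl_inr w
  constructor
  · obtain ⟨w, hw⟩ : ∃ w, eval w (Gk (s + 1)) ≠ 0 := by
      by_contra! hne
      exact hGr (MvPolynomial.funext fun w => by rw [hne w, map_zero])
    exact (key (w ∘ Sum.inl) (w ∘ Sum.inr)).2.2 (by rwa [elim_eq])
  · intro _
    apply eq_C_of_pderiv
    rintro (i | α)
    · refine MvPolynomial.funext fun w => ?_
      have := (key (w ∘ Sum.inl) (w ∘ Sum.inr)).2.1 i
      rwa [elim_eq] at this
    · refine MvPolynomial.funext fun w => ?_
      have := (key (w ∘ Sum.inl) (w ∘ Sum.inr)).1 α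
      rwa [elim_eq] at this
end
end

section
/- Let V and Z be finite-dimensional real inner product spaces, W ⊆ V a linear subspace with orthogonal projection Π_W, and v₀ ∈ V. Let B : V → End(Z) be a map such that B(v) is self-adjoint for every v ∈ V and such that the matrix entries of B(v) with respect to some basis of Z are polynomial functions of v. If the directional derivative of B at v in the direction Π_W(v − v₀) satisfies ∂_{Π_W(v−v₀)}B(v) = 2·B(v) − 2·B(v)² for all v ∈ V, then B is a constant map whose value is the orthogonal projection of Z onto some linear subspace Y ⊆ Z. -/
noncomputable section

open MvPolynomial

theorem aux_pderiv_deg {n : ℕ} (p : MvPolynomial (Fin n) ℝ) (i : Fin n) (d : ℕ)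
    (h : p.totalDegree ≤ d + 1) : (pderiv i p).totalDegree ≤ d := by
  refine Finset.sup_le fun s hs => ?_
  change s.degree ≤ d
  rw [mem_support_iff, coeff_pderiv] at hs
  have h1 : s + Finsupp.single i 1 ∈ p.support := by
    rw [mem_support_iff]
    exact left_ne_zero_of_mul hs
  have h2 := le_totalDegree h1
  have h3 : (s + Finsupp.single i 1).degree = s.degree + 1 := by
    rw [map_add, Finsupp.degree_single]
  have h4 : (s + Finsupp.single i 1).degree ≤ p.totalDegree := h2
  omega

/-- Let `V = ℝⁿ` and `Z = ℝᵐ`, `Π_W` an orthogonal projection of `V` onto a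
subspace `W`, `v₀ ∈ V`, and `B : V → End(Z)` a map whose value at each `v` is self-adjoint
(symmetric matrix in the standard orthonormal basis) and whose matrix entries
`B(v)_{αβ} = eval v (b α β)` are polynomial functions of `v`.  If
`∂_{Π_W(v−v₀)}B(v) = 2·B(v) − 2·B(v)²` for all `v`, then `B` is a constant map whose value is
an orthogonal projection of `Z` onto some subspace (i.e. a symmetric idempotent matrix). -/
theorem stmt_8 (n m : ℕ)
    (Pw : (Fin n → ℝ) →ₗ[ℝ] (Fin n → ℝ)) (hPw : Pw ∘ₗ Pw = Pw)
    (hPwsym : ∀ u w : Fin n → ℝ, dotR (Pw u) w = dotR u (Pw w))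
    (v₀ : Fin n → ℝ)
    (b : Fin m → Fin m → MvPolynomial (Fin n) ℝ)
    (hsym : ∀ (v : Fin n → ℝ) (α β : Fin m),
      MvPolynomial.eval v (b α β) = MvPolynomial.eval v (b β α))
    (hode : ∀ (v : Fin n → ℝ) (α β : Fin m),
      (∑ i : Fin n, (Pw (v - v₀)) i * MvPolynomial.eval v (pderiv i (b α β)))
        = 2 * MvPolynomial.eval v (b α β)
          - 2 * ∑ γ : Fin m, MvPolynomial.eval v (b α γ) * MvPolynomial.eval v (b γ β)) :
    ∃ M : Matrix (Fin m) (Fin m) ℝ, M.transpose = M ∧ M * M = M ∧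
      ∀ (v : Fin n → ℝ) (α β : Fin m), MvPolynomial.eval v (b α β) = M α β := by
  -- polynomial form of the coefficients of the vector field
  let l : Fin n → MvPolynomial (Fin n) ℝ := fun i =>
    ∑ j, C (Pw (Pi.single j 1) i) * (X j - C (v₀ j))
  have hl : ∀ v i, eval v (l i) = Pw (v - v₀) i := by
    intro v i
    have h := LinearMap.pi_apply_eq_sum_univ Pw (v - v₀)
    rw [h]
    simp only [l, map_sum, map_mul, eval_C, map_sub, eval_X, Finset.sum_apply, Pi.smul_apply,
      smul_eq_mul, Pi.sub_apply]
    refine Finset.sum_congr rfl fun j _ => ?_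
    rw [mul_comm]
    have hk : (Pi.single j 1 : Fin n → ℝ) = fun k => if j = k then 1 else 0 := by
      funext k
      simp [Pi.single_apply, eq_comm]
    rw [hk]
  have hld : ∀ i, (l i).totalDegree ≤ 1 := by
    intro i
    refine totalDegree_finsetSum_le fun j _ => ?_
    refine (totalDegree_mul _ _).trans ?_
    have := totalDegree_sub_C_le (X j : MvPolynomial (Fin n) ℝ) (v₀ j)
    simp only [totalDegree_C, totalDegree_X] at this ⊢
    omega
  have hs : ∀ α β, b α β = b β α := fun α β => MvPolynomial.funext fun v => hsym v α β
  have hp : ∀ α β, ∑ i, l i * pderiv i (b α β)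
      = C 2 * b α β - C 2 * ∑ γ, b α γ * b γ β := by
    intro α β
    apply MvPolynomial.funext
    intro v
    rw [map_sub, map_sum, map_mul, map_mul, map_sum]
    simp only [map_mul, eval_C, hl]
    exact hode v α β
  -- all entries have degree zero
  have hdeg : ∀ α β, (b α β).totalDegree = 0 := by
    intro α₀ β₀
    let f : Fin m × Fin m → (MonomialOrder.degLex (σ := Fin n)).syn := fun x =>
      MonomialOrder.degLex.toSyn (MonomialOrder.degLex.degree (b x.1 x.2))
    obtain ⟨⟨α, β⟩, -, hmax⟩ := Finset.exists_max_image Finset.univ f ⟨(α₀, β₀), Finset.mem_univ _⟩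
    have hmax' : ∀ α' β', MonomialOrder.degLex.toSyn (MonomialOrder.degLex.degree (b α' β')) ≤
        MonomialOrder.degLex.toSyn (MonomialOrder.degLex.degree (b α β)) :=
      fun α' β' => hmax (α', β') (Finset.mem_univ _)
    have htd : ∀ α' β', (b α' β').totalDegree ≤ (b α β).totalDegree :=
      fun α' β' => degLex_totalDegree_monotone (hmax' α' β')
    rcases Nat.eq_zero_or_pos (b α β).totalDegree with h0 | hpos
    · exact Nat.le_zero.mp (h0 ▸ htd α₀ β₀)
    exfalso
    set δ := MonomialOrder.degLex.degree (b α β) with hδ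
    have hδd : δ.degree = (b α β).totalDegree := degree_degLexDegree
    have hδ2 : (δ + δ).degree = (b α β).totalDegree + (b α β).totalDegree := by
      rw [map_add, hδd]
    have hz : ∀ q : MvPolynomial (Fin n) ℝ, q.totalDegree ≤ (b α β).totalDegree →
        coeff (δ + δ) q = 0 := by
      intro q hq
      apply coeff_eq_zero_of_totalDegree_lt
      change _ < (δ + δ).degree
      omega
    have hL : coeff (δ + δ) (∑ i, l i * pderiv i (b α α)) = 0 := by
      apply hz
      refine totalDegree_finsetSum_le fun i _ => ?_
      refine (totalDegree_mul _ _).trans ?_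
      have h1 := hld i
      have h2 := aux_pderiv_deg (b α α) i ((b α β).totalDegree - 1) (by have := htd α α; omega)
      omega
    rw [hp, coeff_sub, coeff_C_mul, coeff_C_mul, hz _ (htd α α), coeff_sum] at hL
    have hsq : ∀ γ, coeff (δ + δ) (b α γ * b γ α) = coeff δ (b α γ) * coeff δ (b α γ) := by
      intro γ
      rw [hs γ α]
      exact MonomialOrder.degLex.coeff_mul_of_add_of_degree_le (hmax' α γ) (hmax' α γ)
    simp only [hsq] at hL
    have hsum : ∑ γ, coeff δ (b α γ) * coeff δ (b α γ) = 0 := by linarith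
    rw [Finset.sum_eq_zero_iff_of_nonneg (fun _ _ => mul_self_nonneg _)] at hsum
    have h1 := mul_self_eq_zero.mp (hsum β (Finset.mem_univ _))
    rw [hδ, MonomialOrder.coeff_degree_eq_zero_iff] at h1
    rw [h1, totalDegree_zero] at hpos
    exact lt_irrefl _ hpos
  have hC : ∀ α β, b α β = C (coeff 0 (b α β)) := fun α β =>
    totalDegree_eq_zero_iff_eq_C.mp (hdeg α β)
  have hev : ∀ v α β, eval v (b α β) = coeff 0 (b α β) := by
    intro v α β
    conv_lhs => rw [hC α β]
    rw [eval_C]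
  refine ⟨Matrix.of fun α β => coeff 0 (b α β), ?_, ?_, hev⟩
  · ext α β
    change coeff 0 (b β α) = coeff 0 (b α β)
    rw [hs]
  · ext α β
    rw [Matrix.mul_apply]
    simp only [Matrix.of_apply]
    have h := hode 0 α β
    have hd : ∀ i, pderiv i (b α β) = 0 := by
      intro i
      rw [hC α β, pderiv_C]
    simp only [hd, map_zero, mul_zero, Finset.sum_const_zero, hev] at h
    linarith
end
end

section
/- Let V and Z be finite-dimensional real vector spaces, β : V × V → Z an alternating bilinear map, v₀ ∈ V, and c : V → Z a polynomial map. If the directional derivative of c at v in the direction v − v₀ satisfies ∂_{v−v₀}c(v) = β(v, v₀) for all v ∈ V, then c(v) = β(v, v₀) + c(v₀) for all v ∈ V. -/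
noncomputable section

open MvPolynomial

theorem deriv_line_aux {n : ℕ} (w u : Fin n → ℝ) (p : MvPolynomial (Fin n) ℝ) :
    Polynomial.derivative
      (aeval (fun i => Polynomial.C (w i) + Polynomial.C (u i) * Polynomial.X) p) =
    ∑ i : Fin n, Polynomial.C (u i) *
      aeval (fun i => Polynomial.C (w i) + Polynomial.C (u i) * Polynomial.X)
        (pderiv i p) := by
  classical
  induction p using MvPolynomial.induction_on with
  | C a =>
    simp [← Polynomial.C_eq_algebraMap]
  | add p q hp hq => simp [hp, hq, mul_add, Finset.sum_add_distrib]
  | mul_X p j hp =>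
    have hj : ∀ i, pderiv i (p * X j) = pderiv i p * X j + p * C (if i = j then 1 else 0) := by
      intro i
      rw [Derivation.leibniz, pderiv_X]
      by_cases h : i = j
      · subst h
        simp [mul_comm, add_comm]
      · simp [h, Pi.single_apply, Ne.symm h, mul_comm]
    simp only [hj]
    simp only [map_add, map_mul, aeval_X, aeval_C]
    rw [Polynomial.derivative_mul, hp, Finset.sum_mul]
    simp only [mul_add (Polynomial.C (u _)), Finset.sum_add_distrib]
    congr 1
    · exact Finset.sum_congr rfl fun i _ => by ring
    · rw [Finset.sum_eq_single j]
      · simp only [if_true, map_one, mul_one, Polynomial.derivative_add, Polynomial.derivative_C,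
          Polynomial.derivative_C_mul, Polynomial.derivative_X, zero_add]
        ring
      · intro b _ hb
        simp [hb]
      · simp

theorem eval_line_aux {n : ℕ} (w u : Fin n → ℝ) (p : MvPolynomial (Fin n) ℝ) (t : ℝ) :
    Polynomial.eval t
      (aeval (fun i => Polynomial.C (w i) + Polynomial.C (u i) * Polynomial.X) p) =
    MvPolynomial.eval (w + t • u) p := by
  induction p using MvPolynomial.induction_on with
  | C a => simp [← Polynomial.C_eq_algebraMap]
  | add p q hp hq => simp [hp, hq]
  | mul_X p j hp => simp [hp, mul_comm t]

/-- Let `V = ℝⁿ` and `Z = ℝᵐ`, `bb : V × V → Z` an alternating bilinear map,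
`v₀ ∈ V`, and `c : V → Z` a polynomial map with components `eval · (c α)`.  If
`∂_{v−v₀}c(v) = bb(v, v₀)` for all `v`, then `c(v) = bb(v, v₀) + c(v₀)` for all `v`. -/
theorem stmt_9 (n m : ℕ)
    (bb : (Fin n → ℝ) →ₗ[ℝ] (Fin n → ℝ) →ₗ[ℝ] (Fin m → ℝ))
    (halt : ∀ v : Fin n → ℝ, bb v v = 0)
    (v₀ : Fin n → ℝ) (c : Fin m → MvPolynomial (Fin n) ℝ)
    (hode : ∀ (v : Fin n → ℝ) (α : Fin m),
      (∑ i : Fin n, (v - v₀) i * MvPolynomial.eval v (pderiv i (c α))) = bb v v₀ α) :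
    ∀ (v : Fin n → ℝ) (α : Fin m),
      MvPolynomial.eval v (c α) = bb v v₀ α + MvPolynomial.eval v₀ (c α) := by
  intro v α
  set u := v - v₀ with hu
  set P : Polynomial ℝ :=
    aeval (fun i => Polynomial.C (v₀ i) + Polynomial.C (u i) * Polynomial.X) (c α) with hP
  have hev : ∀ t, P.eval t = MvPolynomial.eval (v₀ + t • u) (c α) :=
    fun t => eval_line_aux v₀ u (c α) t
  have hbu : bb u v₀ α = bb v v₀ α := by simp [hu, halt]
  have hd : Polynomial.X * (Polynomial.derivative P - Polynomial.C (bb v v₀ α)) = 0 := by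
    apply Polynomial.funext
    intro t
    have h := hode (v₀ + t • u) α
    have h2 : bb (v₀ + t • u) v₀ α = t * bb v v₀ α := by simp [halt, hbu]
    rw [h2] at h
    rw [hP, deriv_line_aux]
    simp only [Polynomial.eval_mul, Polynomial.eval_sub, Polynomial.eval_X, Polynomial.eval_C,
      Polynomial.eval_finsetSum, eval_line_aux, Polynomial.eval_zero, mul_sub]
    rw [← h, Finset.mul_sum, sub_eq_zero]
    refine Finset.sum_congr rfl fun i _ => ?_
    simp [mul_assoc]
  have hd2 : Polynomial.derivative (P - Polynomial.C (bb v v₀ α) * Polynomial.X) = 0 := by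
    rcases mul_eq_zero.mp hd with h | h
    · exact absurd h Polynomial.X_ne_zero
    · simpa using h
  have hc := Polynomial.eq_C_of_natDegree_eq_zero
    (Polynomial.derivative_eq_zero.mp hd2)
  have e1 := congrArg (Polynomial.eval 1) hc
  have e0 := congrArg (Polynomial.eval 0) hc
  rw [Polynomial.eval_C, Polynomial.eval_sub, hev] at e1 e0
  simp [hu] at e1 e0
  linarith
end
end

section
/- Let V be a finite-dimensional real inner product space, C ∈ ℝ, and d : V → ℝ a polynomial function satisfying ⟨∇d(v), v⟩ = 2·d(v) + ½·C + (1/8)·‖v‖⁴ for all v ∈ V. Then there exists a self-adjoint endomorphism Q of V such that d(v) = (1/16)·‖v‖⁴ + ⟨v, Q v⟩ − C/4 for all v ∈ V. -/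
noncomputable section

open MvPolynomial

/-- Coefficients of the Euler operator. -/
theorem coeff_euler_aux {n : ℕ} (p : MvPolynomial (Fin n) ℝ) (m : Fin n →₀ ℕ) :
    coeff m (∑ i, X i * pderiv i p) = (m.degree : ℝ) * coeff m p := by
  induction p using MvPolynomial.induction_on' with
  | monomial u a =>
    have h1 : (∑ i, X i * pderiv i (monomial u a)) = u.degree • monomial u a := by
      rw [Finsupp.degree_eq_sum, Finset.sum_smul]
      exact Finset.sum_congr rfl fun i _ => X_mul_pderiv_monomial
    rw [h1, coeff_smul, coeff_monomial]
    split_ifs with hh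
    · subst hh; simp
    · simp
  | add p q hp hq =>
    simp only [map_add, mul_add, Finset.sum_add_distrib, coeff_add] at *
    rw [hp, hq]

/-- Partial derivatives commute. -/
theorem pderiv_comm_aux {n : ℕ} (i j : Fin n) (p : MvPolynomial (Fin n) ℝ) :
    pderiv i (pderiv j p) = pderiv j (pderiv i p) := by
  have h : ⁅(pderiv i : Derivation ℝ (MvPolynomial (Fin n) ℝ) (MvPolynomial (Fin n) ℝ)), (pderiv j : Derivation ℝ (MvPolynomial (Fin n) ℝ) (MvPolynomial (Fin n) ℝ))⁆ = 0 := by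
    apply MvPolynomial.derivation_ext
    intro k
    rw [Derivation.commutator_apply, pderiv_X, pderiv_X]
    simp only [Pi.single_apply]
    split_ifs <;> simp
  have hD := congrArg (fun D => D p) h
  simp only [Derivation.commutator_apply] at hD
  exact sub_eq_zero.1 hD

/-- Converse of Euler's identity in degree two. -/
theorem homog_of_euler_aux {n : ℕ} (p : MvPolynomial (Fin n) ℝ)
    (hp : (∑ i, X i * pderiv i p) = 2 * p) : p.IsHomogeneous 2 := by
  intro m hm
  have h1 := coeff_euler_aux p m
  rw [hp, show (2 : MvPolynomial (Fin n) ℝ) = C 2 from (map_ofNat C 2).symm, coeff_C_mul] at h1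
  have h2 : (m.degree : ℝ) = 2 := (mul_right_cancel₀ hm h1).symm
  have h3 : m.degree = 2 := by exact_mod_cast h2
  rw [Finsupp.degree_eq_weight_one] at h3
  exact h3

/-- Let `V = ℝⁿ`, `C ∈ ℝ`, and `d` a polynomial function on `V` satisfying
`⟨∇d(v), v⟩ = 2·d(v) + ½·C + (1/8)·‖v‖⁴` for all `v` (the gradient having components `∂ᵢd`).
Then there is a self-adjoint endomorphism `Q` of `V` with
`d(v) = (1/16)·‖v‖⁴ + ⟨v, Qv⟩ − C/4` for all `v`. -/
theorem stmt_10 (n : ℕ) (C : ℝ) (d : MvPolynomial (Fin n) ℝ)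
    (h : ∀ v : Fin n → ℝ,
      (∑ i : Fin n, v i * MvPolynomial.eval v (pderiv i d))
        = 2 * MvPolynomial.eval v d + (1 / 2) * C + (1 / 8) * (dotR v v) ^ 2) :
    ∃ Q : (Fin n → ℝ) →ₗ[ℝ] (Fin n → ℝ),
      (∀ u w : Fin n → ℝ, dotR (Q u) w = dotR u (Q w)) ∧
      ∀ v : Fin n → ℝ,
        MvPolynomial.eval v d = (1 / 16) * (dotR v v) ^ 2 + dotR v (Q v) - C / 4 := by
  set S : MvPolynomial (Fin n) ℝ := ∑ i, X i ^ 2 with hS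
  have hSe : ∀ v, eval v S = dotR v v := by
    intro v; simp [hS, dotR, pow_two]
  have hSh : (S ^ 2).IsHomogeneous 4 := by
    have : S.IsHomogeneous 2 :=
      IsHomogeneous.sum _ _ _ fun i _ => by simpa using (isHomogeneous_X ℝ i).pow 2
    simpa using this.pow 2
  have hE4 := hSh.sum_X_mul_pderiv
  set e : MvPolynomial (Fin n) ℝ := d + MvPolynomial.C (C / 4) - MvPolynomial.C (1 / 16) * S ^ 2
    with he
  have hEe : (∑ i, X i * pderiv i e) = 2 * e := by
    apply MvPolynomial.funext
    intro v
    have h4 := congrArg (eval v) hE4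
    have h0 := h v
    simp only [map_sum, map_mul, eval_X, nsmul_eq_mul, map_natCast, map_pow, hSe] at h4
    have hL : eval v (∑ i, X i * pderiv i e)
        = (∑ i, v i * eval v (pderiv i d)) - 1 / 16 * ∑ i, v i * eval v (pderiv i (S ^ 2)) := by
      rw [Finset.mul_sum, ← Finset.sum_sub_distrib, map_sum]
      refine Finset.sum_congr rfl fun i _ => ?_
      rw [he, map_sub, map_add, pderiv_C_mul, pderiv_C]
      simp only [map_mul, map_sub, map_add, eval_X, map_zero, eval_C]
      ring
    rw [hL, h4, h0, he]
    simp only [map_mul, map_sub, map_add, eval_C, map_pow, hSe, map_ofNat]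
    push_cast
    ring
  have hh := homog_of_euler_aux e hEe
  let A : Fin n → Fin n → ℝ := fun i j => eval 0 (pderiv i (pderiv j e))
  have hA : ∀ i j, A i j = A j i := fun i j => by
    simp only [A]; rw [pderiv_comm_aux]
  have hconst : ∀ i j v, eval v (pderiv i (pderiv j e)) = A i j := by
    intro i j v
    have h0 : (pderiv i (pderiv j e)).IsHomogeneous 0 := by
      simpa using (hh.pderiv (i := j)).pderiv (i := i)
    have h1 := totalDegree_eq_zero_iff_eq_C.1 (Nat.le_zero.1 h0.totalDegree_le)
    simp only [A]
    rw [h1]; simp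
  have h1 : ∀ j v, eval v (pderiv j e) = ∑ i, v i * A i j := by
    intro j v
    have := congrArg (eval v) (hh.pderiv (i := j)).sum_X_mul_pderiv
    simp only [map_sum, map_mul, eval_X, hconst] at this
    simpa using this.symm
  have h2 : ∀ v, 2 * eval v e = ∑ j, v j * ∑ i, v i * A i j := by
    intro v
    have := congrArg (eval v) hEe
    simp only [map_sum, map_mul, eval_X, h1, map_ofNat] at this
    exact this.symm
  refine ⟨Matrix.mulVecLin (Matrix.of fun i j => (1 / 2) * A i j), ?_, ?_⟩
  · intro u w
    simp only [dotR, Matrix.mulVecLin_apply, Matrix.mulVec, dotProduct, Matrix.of_apply,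
      Finset.sum_mul, Finset.mul_sum]
    rw [Finset.sum_comm]
    refine Finset.sum_congr rfl fun i _ => Finset.sum_congr rfl fun j _ => ?_
    rw [hA j i]; ring
  · intro v
    have h3 : dotR v (Matrix.mulVecLin (Matrix.of fun i j => (1 / 2) * A i j) v) = eval v e := by
      have : eval v e = (1 / 2) * ∑ j, v j * ∑ i, v i * A i j := by
        rw [← h2]; ring
      rw [this]
      simp only [dotR, Matrix.mulVecLin_apply, Matrix.mulVec, dotProduct, Matrix.of_apply,
        Finset.mul_sum]
      refine Finset.sum_congr rfl fun i _ => Finset.sum_congr rfl fun j _ => ?_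
      rw [hA j i]; ring
    rw [h3, he]
    simp only [map_mul, map_sub, map_add, eval_C, map_pow, hSe]
    ring
end
end

section
/- Let V be a nonzero finite-dimensional real inner product space, Q a self-adjoint endomorphism of V, and c₀ ∈ ℝ. If ‖v‖²·( (1/16)‖v‖⁴ + ⟨v, Qv⟩ + c₀ ) = ‖ (1/4)‖v‖²·v + 2·Qv ‖² for all v ∈ V, then Q² = (c₀/4)·Id_V; in particular c₀ ≥ 0. -/
open RealInnerProductSpace

/-- Let `V` be a nonzero finite-dimensional real inner product space, `Q` a
self-adjoint endomorphism of `V` and `c₀ ∈ ℝ`.  If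
`‖v‖²·((1/16)‖v‖⁴ + ⟨v, Qv⟩ + c₀) = ‖(1/4)‖v‖²·v + 2·Qv‖²` for all `v ∈ V`, then
`Q² = (c₀/4)·Id_V`; in particular `c₀ ≥ 0`. -/
theorem stmt_11 (V : Type*) [NormedAddCommGroup V] [InnerProductSpace ℝ V]
    [FiniteDimensional ℝ V] [Nontrivial V]
    (Q : V →ₗ[ℝ] V) (hQ : ∀ u w : V, ⟪Q u, w⟫ = ⟪u, Q w⟫) (c₀ : ℝ)
    (h : ∀ v : V,
      ‖v‖ ^ 2 * ((1 / 16) * ‖v‖ ^ 4 + ⟪v, Q v⟫ + c₀)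
        = ‖((1 / 4) * ‖v‖ ^ 2) • v + (2 : ℝ) • Q v‖ ^ 2) :
    Q ∘ₗ Q = (c₀ / 4) • LinearMap.id ∧ 0 ≤ c₀ := by
  have key : ∀ v : V, 4 * ⟪Q v, Q v⟫ = c₀ * ⟪v, v⟫ := by
    intro v
    have h1 := h v
    rw [norm_add_sq_real, norm_smul, norm_smul, inner_smul_left, inner_smul_right,
      mul_pow, mul_pow, Real.norm_eq_abs, Real.norm_eq_abs, sq_abs, sq_abs] at h1
    simp only [conj_trivial] at h1
    rw [real_inner_self_eq_norm_sq, real_inner_self_eq_norm_sq]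
    linarith
  have pol : ∀ u w : V, 4 * ⟪Q u, Q w⟫ = c₀ * ⟪u, w⟫ := by
    intro u w
    have h1 := key (u + w)
    have h2 := key u
    have h3 := key w
    rw [map_add, real_inner_add_add_self, real_inner_add_add_self] at h1
    linarith
  constructor
  · ext u
    apply ext_inner_right ℝ
    intro w
    have h1 := pol u w
    simp only [LinearMap.comp_apply, LinearMap.smul_apply, LinearMap.id_apply,
      real_inner_smul_left]
    rw [hQ]
    linarith
  · obtain ⟨v, hv⟩ := exists_ne (0 : V)
    have h1 := key v
    have h2 : 0 < ⟪v, v⟫ := real_inner_self_pos.mpr hv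
    have h3 : 0 ≤ ⟪Q v, Q v⟫ := real_inner_self_nonneg
    by_contra hc
    push Not at hc
    nlinarith [mul_neg_of_neg_of_pos hc h2]
end

section
/- Let V = V₊ ⊕ V₋ be an orthogonal decomposition of V with orthogonal projections Π₊, Π₋, let λ ≥ 0, v₀ ∈ V, z₀ ∈ Z. Then the polynomial function G₀(v,z) = (1/16)‖v − v₀‖⁴ + ‖z − z₀ + ½[v, v₀]‖² + λ·⟨v − v₀, (Π₊ − Π₋)(v − v₀)⟩ + 4λ² is non-negative at every point (v,z) ∈ V × Z. -/
noncomputable section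

/-- Let `V = ℝⁿ`, `Z = ℝᵐ`, `J` of Heisenberg type with induced bracket `br`,
`V = V₊ ⊕ V₋` an orthogonal decomposition (projections `P₊, P₋`), `λ ≥ 0`, `v₀ ∈ V`, `z₀ ∈ Z`.
Then the polynomial function
`G₀(v,z) = (1/16)‖v − v₀‖⁴ + ‖z − z₀ + ½[v, v₀]‖² + λ⟨v − v₀, (P₊ − P₋)(v − v₀)⟩ + 4λ²`
is non-negative at every point `(v, z)`. -/
theorem stmt_15 (n m : ℕ)
    (J : (Fin m → ℝ) →ₗ[ℝ] (Fin n → ℝ) →ₗ[ℝ] (Fin n → ℝ))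
    (hJ : ∀ (z : Fin m → ℝ) (v : Fin n → ℝ), dotR (J z v) (J z v) = dotR z z * dotR v v)
    (br : (Fin n → ℝ) →ₗ[ℝ] (Fin n → ℝ) →ₗ[ℝ] (Fin m → ℝ))
    (hbr : ∀ (v₁ v₂ : Fin n → ℝ) (z : Fin m → ℝ), dotR (br v₁ v₂) z = dotR (J z v₁) v₂)
    (Pp Pm : (Fin n → ℝ) →ₗ[ℝ] (Fin n → ℝ))
    (hsum : Pp + Pm = LinearMap.id)
    (hPp : Pp ∘ₗ Pp = Pp) (hPm : Pm ∘ₗ Pm = Pm)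
    (hPpsym : ∀ u w : Fin n → ℝ, dotR (Pp u) w = dotR u (Pp w))
    (hPmsym : ∀ u w : Fin n → ℝ, dotR (Pm u) w = dotR u (Pm w))
    (lam : ℝ) (hlam : 0 ≤ lam)
    (v₀ : Fin n → ℝ) (z₀ : Fin m → ℝ) :
    ∀ (v : Fin n → ℝ) (z : Fin m → ℝ),
      0 ≤ (1 / 16) * (dotR (v - v₀) (v - v₀)) ^ 2
        + dotR (z - z₀ + (1 / 2 : ℝ) • br v v₀) (z - z₀ + (1 / 2 : ℝ) • br v v₀)
        + lam * dotR (v - v₀) (Pp (v - v₀) - Pm (v - v₀))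
        + 4 * lam ^ 2 := by
  intro v z
  set w := v - v₀ with hw
  have hz : ∀ {k : ℕ} (a : Fin k → ℝ), 0 ≤ dotR a a := fun a =>
    Finset.sum_nonneg fun i _ => mul_self_nonneg (a i)
  have h1 : Pp w + Pm w = w := by
    have := congrArg (fun f => f w) hsum
    simpa using this
  have h2 : dotR w (Pp w) = dotR (Pp w) (Pp w) := by
    have h := congrArg (fun f => f w) hPp
    simp only [LinearMap.comp_apply] at h
    rw [hPpsym, h]
  have h3 : dotR w (Pp w - Pm w) = 2 * dotR w (Pp w) - dotR w w := by
    have h4 : Pm w = w - Pp w := by rw [eq_sub_iff_add_eq, add_comm, h1]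
    rw [h4]
    unfold dotR
    rw [Finset.mul_sum, ← Finset.sum_sub_distrib]
    refine Finset.sum_congr rfl fun i _ => ?_
    simp only [Pi.sub_apply]
    ring
  have h5 := hz (z - z₀ + (1 / 2 : ℝ) • br v v₀)
  have h6 := mul_nonneg hlam (hz (Pp w))
  rw [h3, h2]
  nlinarith [sq_nonneg (dotR w w / 4 - 2 * lam)]
end
end

section
/- Let V and Z be finite-dimensional real inner product spaces, J : Z → End(V) a linear map satisfying ‖J_z v‖ = ‖z‖·‖v‖ for all z ∈ Z, v ∈ V, and let V = V₁ ⊕ V₂ be an orthogonal decomposition with orthogonal projections Π₁, Π₂. Then the identity ‖Π₁ J_z(Π₂ v + v)‖² + ‖Π₂ J_z Π₂ v‖² = 4·‖Π₂ v‖²·‖z‖² holds for all v ∈ V and z ∈ Z if and only if J_z(V₁) ⊆ V₂ and J_z(V₂) ⊆ V₁ for every z ∈ Z. -/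
open RealInnerProductSpace

/-- Let `V`, `Z` be finite-dimensional real inner product spaces,
`J : Z → End(V)` linear with `‖J_z v‖ = ‖z‖·‖v‖`, and `V = V₁ ⊕ V₂` an orthogonal
decomposition with orthogonal projections `P₁, P₂`.  Then
`‖P₁ J_z(P₂v + v)‖² + ‖P₂ J_z P₂v‖² = 4‖P₂v‖²‖z‖²` holds for all `v, z` iff
`J_z(V₁) ⊆ V₂` and `J_z(V₂) ⊆ V₁` for every `z`. -/
theorem stmt_18 (V Z : Type*)
    [NormedAddCommGroup V] [InnerProductSpace ℝ V] [FiniteDimensional ℝ V]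
    [NormedAddCommGroup Z] [InnerProductSpace ℝ Z] [FiniteDimensional ℝ Z]
    (J : Z →ₗ[ℝ] V →ₗ[ℝ] V)
    (hJ : ∀ (z : Z) (v : V), ‖J z v‖ = ‖z‖ * ‖v‖)
    (P₁ P₂ : V →ₗ[ℝ] V)
    (hsum : P₁ + P₂ = LinearMap.id)
    (hP₁ : P₁ ∘ₗ P₁ = P₁) (hP₂ : P₂ ∘ₗ P₂ = P₂)
    (hP₁sym : ∀ u w : V, ⟪P₁ u, w⟫ = ⟪u, P₁ w⟫)
    (hP₂sym : ∀ u w : V, ⟪P₂ u, w⟫ = ⟪u, P₂ w⟫) :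
    (∀ (v : V) (z : Z),
        ‖P₁ (J z (P₂ v + v))‖ ^ 2 + ‖P₂ (J z (P₂ v))‖ ^ 2 = 4 * ‖P₂ v‖ ^ 2 * ‖z‖ ^ 2) ↔
    (∀ (z : Z) (v : V),
        J z (P₁ v) ∈ LinearMap.range P₂ ∧ J z (P₂ v) ∈ LinearMap.range P₁) := by
  have hs : ∀ x, P₁ x + P₂ x = x := fun x => by
    have := LinearMap.congr_fun hsum x
    simpa using this
  have h11 : ∀ x, P₁ (P₁ x) = P₁ x := fun x => LinearMap.congr_fun hP₁ x
  have h22 : ∀ x, P₂ (P₂ x) = P₂ x := fun x => LinearMap.congr_fun hP₂ x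
  have h12 : ∀ x, P₁ (P₂ x) = 0 := fun x => by
    have := hs (P₂ x)
    rw [h22] at this
    simpa using this
  have h21 : ∀ x, P₂ (P₁ x) = 0 := fun x => by
    have := hs (P₁ x)
    rw [h11] at this
    simpa using this
  have hpy : ∀ x, ‖x‖ ^ 2 = ‖P₁ x‖ ^ 2 + ‖P₂ x‖ ^ 2 := fun x => by
    have h0 : ⟪P₁ x, P₂ x⟫ = 0 := by rw [hP₁sym, h12, inner_zero_right]
    have h1 := norm_add_sq_real (P₁ x) (P₂ x)
    rw [hs, h0] at h1
    linarith
  constructor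
  · intro h z v
    constructor
    · have h1 := h (P₁ v) z
      rw [h21] at h1
      simp at h1
      refine ⟨J z (P₁ v), ?_⟩
      have h2 := hs (J z (P₁ v))
      rw [h1, zero_add] at h2
      exact h2
    · have h1 := h (P₂ v) z
      have h3 := hpy (J z (P₂ v))
      rw [hJ, mul_pow] at h3
      rw [h22, ← two_smul ℝ (P₂ v), map_smul, map_smul, norm_smul, mul_pow] at h1
      norm_num at h1
      have h4 : ‖P₂ (J z (P₂ v))‖ ^ 2 = 0 := by nlinarith
      have h5 : P₂ (J z (P₂ v)) = 0 := by simpa using h4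
      refine ⟨J z (P₂ v), ?_⟩
      have h2 := hs (J z (P₂ v))
      rw [h5, add_zero] at h2
      exact h2
  · intro h v z
    obtain ⟨⟨a, ha⟩, ⟨b, hb⟩⟩ := h z v
    have e1 : P₁ (J z (P₁ v)) = 0 := by rw [← ha, h12]
    have e2 : P₂ (J z (P₂ v)) = 0 := by rw [← hb, h21]
    have e3 : P₁ (J z (P₂ v)) = J z (P₂ v) := by rw [← hb, h11]
    have e4 : P₁ (J z v) = J z (P₂ v) := by
      conv_lhs => rw [← hs v, map_add, map_add, e1, e3, zero_add]
    rw [map_add, map_add, e3, e4, e2, ← two_smul ℝ (J z (P₂ v)), norm_smul, hJ]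
    norm_num
    ring
end

section
/- Let G, H ∈ ℝ[x₁,…,x_N, y₁,…,y_M, t] be polynomials whose degrees in the variables y₁,…,y_M are at most 2, and let G₂ and H₂ denote their homogeneous parts of degree 2 in the variables y₁,…,y_M. Assume that G₂ and H₂ do not involve the variable t and that G₂ ≠ 0. If G/t² and H/t³ are algebraically dependent elements of the fraction field K, then H₂ = 0. -/
noncomputable section

/-- The weight assigning `1` to each of the variables `y₁,…,y_M` and `0` to the variables
`x₁,…,x_N` and `t`, so that the associated weighted degree is the degree in the `y`-variables. -/
def yWeight (N M : ℕ) : (Fin N ⊕ Fin M ⊕ Unit) → ℕ :=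
  Sum.elim (fun _ => 0) (Sum.elim (fun _ => 1) (fun _ => 0))

/-- Substitution `x_i ↦ x_i * Z ^ w i`. -/
def scaleHom {σ : Type} (w : σ → ℕ) : MvPolynomial σ ℝ →+* Polynomial (MvPolynomial σ ℝ) :=
  MvPolynomial.eval₂Hom (Polynomial.C.comp MvPolynomial.C)
    (fun i => Polynomial.C (MvPolynomial.X i) * Polynomial.X ^ w i)

lemma scaleHom_monomial {σ : Type} (w : σ → ℕ) (m : σ →₀ ℕ) (a : ℝ) :
    scaleHom w (MvPolynomial.monomial m a) =
      Polynomial.C (MvPolynomial.monomial m a) * Polynomial.X ^ (Finsupp.weight w m) := by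
  simp only [scaleHom, MvPolynomial.coe_eval₂Hom, MvPolynomial.eval₂_monomial]
  rw [MvPolynomial.monomial_eq (s := m) (a := a)]
  simp only [Finsupp.prod, mul_pow, Finset.prod_mul_distrib, map_mul, map_prod, map_pow,
    RingHom.comp_apply, ← pow_mul, Finset.prod_pow_eq_pow_sum, Finsupp.weight_apply, Finsupp.sum,
    smul_eq_mul, mul_assoc]
  simp only [mul_comm]

lemma scaleHom_coeff {σ : Type} (w : σ → ℕ) (p : MvPolynomial σ ℝ) (n : ℕ) :
    (scaleHom w p).coeff n = MvPolynomial.weightedHomogeneousComponent w n p := by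
  classical
  induction p using MvPolynomial.induction_on' with
  | monomial m a =>
    rw [scaleHom_monomial, Polynomial.coeff_C_mul_X_pow]
    ext e
    rw [MvPolynomial.coeff_weightedHomogeneousComponent]
    by_cases h : m = e
    · subst h
      simp only [eq_comm]
      split_ifs <;> simp
    · split_ifs <;> simp [MvPolynomial.coeff_monomial, h]
  | add p q hp hq => simp [hp, hq]

lemma scaleHom_ne_zero {σ : Type} (w : σ → ℕ) (p : MvPolynomial σ ℝ) (hp : p ≠ 0) :
    scaleHom w p ≠ 0 := by
  classical
  intro h
  obtain ⟨m, hm⟩ := MvPolynomial.ne_zero_iff.1 hp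
  have h1 := scaleHom_coeff w p (Finsupp.weight w m)
  rw [h] at h1
  have h2 := congrArg (MvPolynomial.coeff m) h1
  rw [MvPolynomial.coeff_weightedHomogeneousComponent] at h2
  simp at h2
  exact hm h2.symm

lemma scaleHom_natDegree {σ : Type} (w : σ → ℕ) (p : MvPolynomial σ ℝ) (k : ℕ)
    (hp : MvPolynomial.weightedTotalDegree w p ≤ k) : (scaleHom w p).natDegree ≤ k := by
  rw [Polynomial.natDegree_le_iff_coeff_eq_zero]
  intro n hn
  rw [scaleHom_coeff]
  exact MvPolynomial.weightedHomogeneousComponent_eq_zero _ _ (lt_of_le_of_lt hp hn)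

lemma scaleHom_const {σ : Type} [DecidableEq σ] (t : σ) (p : MvPolynomial σ ℝ)
    (hp : MvPolynomial.degreeOf t p = 0) (hp0 : p ≠ 0) :
    ∃ u : MvPolynomial σ ℝ, u ≠ 0 ∧ scaleHom (Pi.single t 1) p = Polynomial.C u := by
  have hd : (scaleHom (Pi.single t 1) p).natDegree = 0 := by
    rw [← Nat.le_zero]
    apply scaleHom_natDegree
    unfold MvPolynomial.weightedTotalDegree
    apply Finset.sup_le
    intro m hm
    have h1 := MvPolynomial.monomial_le_degreeOf t hm
    have h2 : m t = 0 := by omega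
    rw [Finsupp.weight_apply, Finsupp.sum]
    apply le_of_eq
    apply Finset.sum_eq_zero
    intro i _
    by_cases hi : i = t
    · subst hi; simp [h2]
    · simp [hi]
  obtain ⟨u, hu⟩ := Polynomial.natDegree_eq_zero.1 hd
  refine ⟨u, ?_, hu.symm⟩
  rintro rfl
  exact scaleHom_ne_zero _ p hp0 (by rw [← hu]; simp)

lemma scaleHom_X {σ : Type} (w : σ → ℕ) (i : σ) :
    scaleHom w (MvPolynomial.X i) = Polynomial.C (MvPolynomial.X i) * Polynomial.X ^ w i := by
  simp [scaleHom]

lemma scaleHom_C {σ : Type} (w : σ → ℕ) (r : ℝ) :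
    scaleHom w (MvPolynomial.C r) = Polynomial.C (MvPolynomial.C r) := by
  simp [scaleHom]

/-- Work in `ℝ[x₁,…,x_N, y₁,…,y_M, t]`, modelled as
`MvPolynomial (Fin N ⊕ Fin M ⊕ Unit) ℝ` with `t = X (Sum.inr (Sum.inr ()))`.  Let `G, H` have
degree at most `2` in the `y`-variables, with `y`-degree-2 homogeneous parts `G₂, H₂` not
involving `t`, and `G₂ ≠ 0`.  If `G/t²` and `H/t³` are algebraically dependent in the fraction
field, then `H₂ = 0`. -/
theorem stmt_19 (N M : ℕ)
    (G H : MvPolynomial (Fin N ⊕ Fin M ⊕ Unit) ℝ)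
    (hGdeg : MvPolynomial.weightedTotalDegree (yWeight N M) G ≤ 2)
    (hHdeg : MvPolynomial.weightedTotalDegree (yWeight N M) H ≤ 2)
    (hG2t : MvPolynomial.degreeOf (Sum.inr (Sum.inr ()))
      (MvPolynomial.weightedHomogeneousComponent (yWeight N M) 2 G) = 0)
    (hH2t : MvPolynomial.degreeOf (Sum.inr (Sum.inr ()))
      (MvPolynomial.weightedHomogeneousComponent (yWeight N M) 2 H) = 0)
    (hG2 : MvPolynomial.weightedHomogeneousComponent (yWeight N M) 2 G ≠ 0)
    (R : MvPolynomial (Fin 2) ℝ) (hR : R ≠ 0)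
    (hdep :
      MvPolynomial.eval₂
        ((algebraMap (MvPolynomial (Fin N ⊕ Fin M ⊕ Unit) ℝ)
            (FractionRing (MvPolynomial (Fin N ⊕ Fin M ⊕ Unit) ℝ))).comp MvPolynomial.C)
        ![algebraMap (MvPolynomial (Fin N ⊕ Fin M ⊕ Unit) ℝ)
            (FractionRing (MvPolynomial (Fin N ⊕ Fin M ⊕ Unit) ℝ)) G /
          (algebraMap (MvPolynomial (Fin N ⊕ Fin M ⊕ Unit) ℝ)
            (FractionRing (MvPolynomial (Fin N ⊕ Fin M ⊕ Unit) ℝ))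
            (MvPolynomial.X (Sum.inr (Sum.inr ())))) ^ 2,
          algebraMap (MvPolynomial (Fin N ⊕ Fin M ⊕ Unit) ℝ)
            (FractionRing (MvPolynomial (Fin N ⊕ Fin M ⊕ Unit) ℝ)) H /
          (algebraMap (MvPolynomial (Fin N ⊕ Fin M ⊕ Unit) ℝ)
            (FractionRing (MvPolynomial (Fin N ⊕ Fin M ⊕ Unit) ℝ))
            (MvPolynomial.X (Sum.inr (Sum.inr ())))) ^ 3] R = 0) :
    MvPolynomial.weightedHomogeneousComponent (yWeight N M) 2 H = 0 := by
  classical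
  by_contra hH2
  set t : MvPolynomial (Fin N ⊕ Fin M ⊕ Unit) ℝ := MvPolynomial.X (Sum.inr (Sum.inr ())) with ht
  set d := R.totalDegree with hd
  have ht0 : t ≠ 0 := MvPolynomial.X_ne_zero _
  have hle : ∀ m ∈ R.support, m 0 + m 1 ≤ d := by
    intro m hm
    have := MvPolynomial.le_totalDegree hm
    rwa [Finsupp.sum_fintype _ _ (fun _ => rfl), Fin.sum_univ_two] at this
  -- clear denominators
  have h1 : ∑ m ∈ R.support,
      MvPolynomial.C (R.coeff m) * G ^ m 0 * H ^ m 1 * t ^ (3 * d - 2 * m 0 - 3 * m 1) = 0 := by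
    apply IsFractionRing.injective (MvPolynomial (Fin N ⊕ Fin M ⊕ Unit) ℝ) (FractionRing (MvPolynomial (Fin N ⊕ Fin M ⊕ Unit) ℝ))
    rw [map_zero, map_sum]
    have hT0 : algebraMap (MvPolynomial (Fin N ⊕ Fin M ⊕ Unit) ℝ) (FractionRing (MvPolynomial (Fin N ⊕ Fin M ⊕ Unit) ℝ)) t ≠ 0 := by
      simpa using ht0
    rw [MvPolynomial.eval₂_eq'] at hdep
    have h2 := congrArg (fun z => z * algebraMap (MvPolynomial (Fin N ⊕ Fin M ⊕ Unit) ℝ) (FractionRing (MvPolynomial (Fin N ⊕ Fin M ⊕ Unit) ℝ)) t ^ (3 * d)) hdep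
    simp only [zero_mul, Finset.sum_mul] at h2
    rw [← h2]
    apply Finset.sum_congr rfl
    intro m hm
    have hm' := hle m hm
    obtain ⟨k, hk⟩ : ∃ k, 3 * d = 2 * m 0 + 3 * m 1 + k := Nat.exists_eq_add_of_le (by omega)
    have hk' : 3 * d - 2 * m 0 - 3 * m 1 = k := by omega
    rw [hk', hk]
    simp only [Fin.prod_univ_two, map_mul, map_pow, RingHom.comp_apply, Matrix.cons_val_zero,
      Matrix.cons_val_one, div_pow, ← pow_mul, pow_add]
    field_simp
  -- top degree in y
  set G2 := MvPolynomial.weightedHomogeneousComponent (yWeight N M) 2 G with hG2def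
  set H2 := MvPolynomial.weightedHomogeneousComponent (yWeight N M) 2 H with hH2def
  have hGn := scaleHom_natDegree _ G 2 hGdeg
  have hHn := scaleHom_natDegree _ H 2 hHdeg
  have h3 : ∑ m ∈ R.support, (if m 0 + m 1 = d then
      MvPolynomial.C (R.coeff m) * G2 ^ m 0 * H2 ^ m 1 * t ^ (m 0) else 0) = 0 := by
    have h4 := congrArg (fun z => (scaleHom (yWeight N M) z).coeff (2 * d)) h1
    simp only [map_zero, Polynomial.coeff_zero, map_sum, Polynomial.finsetSum_coeff] at h4
    refine Eq.trans (Finset.sum_congr rfl ?_) h4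
    intro m hm
    have hm' := hle m hm
    have hw : yWeight N M (Sum.inr (Sum.inr ())) = 0 := rfl
    simp only [map_mul, map_pow, scaleHom_C, ht, scaleHom_X, hw, pow_zero, mul_one]
    rw [← Polynomial.C_pow, Polynomial.coeff_mul_C, mul_assoc (Polynomial.C _),
      Polynomial.coeff_C_mul]
    have hGp := Polynomial.natDegree_pow_le_of_le (m 0) hGn
    have hHp := Polynomial.natDegree_pow_le_of_le (m 1) hHn
    split_ifs with hmd
    · have e1 : 2 * d = m 0 * 2 + m 1 * 2 := by omega
      have e2 : 3 * d - 2 * m 0 - 3 * m 1 = m 0 := by omega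
      rw [e2, e1, Polynomial.coeff_mul_add_eq_of_natDegree_le hGp hHp,
        Polynomial.coeff_pow_of_natDegree_le hGn, Polynomial.coeff_pow_of_natDegree_le hHn,
        scaleHom_coeff, scaleHom_coeff]
      ring
    · rw [Polynomial.coeff_eq_zero_of_natDegree_lt]
      · simp
      · exact lt_of_le_of_lt (Polynomial.natDegree_mul_le_of_le hGp hHp) (by omega)
  -- separate powers of t
  obtain ⟨u, hu0, hu⟩ := scaleHom_const _ G2 hG2t hG2
  obtain ⟨v, hv0, hv⟩ := scaleHom_const _ H2 hH2t hH2
  obtain ⟨m₀, hm₀, hm₀d⟩ : ∃ m ∈ R.support, m 0 + m 1 = d := by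
    obtain ⟨m, hm, hmd⟩ := Finset.exists_mem_eq_sup R.support
      (MvPolynomial.support_nonempty.2 hR) (fun s => s.sum fun _ e => e)
    refine ⟨m, hm, ?_⟩
    have : d = m.sum fun _ e => e := hmd
    rw [this, Finsupp.sum_fintype _ _ (fun _ => rfl), Fin.sum_univ_two]
  have h5 := congrArg (fun z => (scaleHom (Pi.single (Sum.inr (Sum.inr ())) 1) z).coeff (m₀ 0)) h3
  simp only [map_zero, Polynomial.coeff_zero, map_sum, Polynomial.finsetSum_coeff] at h5
  rw [Finset.sum_eq_single m₀] at h5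
  · rw [if_pos hm₀d] at h5
    simp only [map_mul, map_pow, scaleHom_C, ht, scaleHom_X, hu, hv, Pi.single_eq_same, pow_one,
      mul_pow] at h5
    simp only [← Polynomial.C_pow, ← Polynomial.C_mul, ← mul_assoc] at h5
    rw [Polynomial.coeff_C_mul_X_pow, if_pos rfl] at h5
    have hc : (MvPolynomial.C (R.coeff m₀) : MvPolynomial (Fin N ⊕ Fin M ⊕ Unit) ℝ) ≠ 0 := by
      simpa using MvPolynomial.mem_support_iff.1 hm₀
    exact mul_ne_zero (mul_ne_zero (mul_ne_zero hc (pow_ne_zero _ hu0)) (pow_ne_zero _ hv0))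
      (pow_ne_zero _ ht0) h5
  · intro m hm hne
    split_ifs with hmd
    · simp only [map_mul, map_pow, scaleHom_C, ht, scaleHom_X, hu, hv, Pi.single_eq_same, pow_one,
        mul_pow]
      simp only [← Polynomial.C_pow, ← Polynomial.C_mul, ← mul_assoc]
      rw [Polynomial.coeff_C_mul_X_pow, if_neg]
      intro h
      apply hne
      ext i
      fin_cases i
      · exact h.symm
      · show m 1 = m₀ 1
        omega
    · simp
  · exact fun h => absurd hm₀ h
end
end
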